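/- arXiv:2405.00730 — 3 statements merged into one kernel-verified Lean document; each statement's English description precedes it below -/
import Mathlib

section
/- Let V be a bounded symmetric bilinear form on H¹(ℝ). Then m(V) = inf_{a∈ℝ} F(a;V), where both sides are taken as infima with values in [−∞, ∞). (Decomposition principle.) -/
open MeasureTheory Filter Real Topology

/-- The supremum norm `‖u‖_∞` of a (bounded continuous) function `u : ℝ → ℝ`. -/
noncomputable def supNorm (u : ℝ → ℝ) : ℝ := ⨆ x : ℝ, |u x|

/-- `u` is (the continuous representative of) an element of `H¹(ℝ)`:
`u` is continuous, `u ∈ L²(ℝ)`, and there is a weak derivative `u' ∈ L²(ℝ)`,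
i.e. `u x = u 0 + ∫_0^x u'`. -/
def IsH1 (u : ℝ → ℝ) : Prop :=
  Continuous u ∧ MemLp u 2 (volume : Measure ℝ) ∧
    ∃ u' : ℝ → ℝ, MemLp u' 2 (volume : Measure ℝ) ∧
      ∀ x : ℝ, u x = u 0 + ∫ t in (0:ℝ)..x, u' t

/-- The Dirichlet energy `∫_ℝ |u'(x)|² dx`.  (For `u ∈ H¹(ℝ)` the classical
derivative `deriv u` exists a.e. and coincides a.e. with the weak derivative.) -/
noncomputable def energy (u : ℝ → ℝ) : ℝ := ∫ x : ℝ, (deriv u x) ^ 2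

/-- The `H¹(ℝ)` norm `(∫ |u|² + ∫ |u'|²)^{1/2}`. -/
noncomputable def h1Norm (u : ℝ → ℝ) : ℝ :=
  Real.sqrt ((∫ x : ℝ, (u x) ^ 2) + energy u)

/-- A bounded symmetric bilinear form on `H¹(ℝ)`. -/
structure BddSymmBilinearForm where
  B : (ℝ → ℝ) → (ℝ → ℝ) → ℝ
  symm : ∀ u v, IsH1 u → IsH1 v → B u v = B v u
  add_left : ∀ u v w, IsH1 u → IsH1 v → IsH1 w → B (u + v) w = B u w + B v w
  smul_left : ∀ (c : ℝ) (u v : ℝ → ℝ), IsH1 u → IsH1 v → B (c • u) v = c * B u v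
  bounded : ∃ C : ℝ, ∀ u v, IsH1 u → IsH1 v → |B u v| ≤ C * h1Norm u * h1Norm v

/-- `I(u;V) = ∫_ℝ |u'(x)|² dx + V(u,u)` for a bounded symmetric bilinear form `V`. -/
noncomputable def IB (V : BddSymmBilinearForm) (u : ℝ → ℝ) : ℝ := energy u + V.B u u

/-- Membership in `K_a = { u ∈ H¹(ℝ) ; u(a) = ‖u‖_∞ = 1 }`. -/
def InKa (a : ℝ) (u : ℝ → ℝ) : Prop := IsH1 u ∧ u a = 1 ∧ supNorm u = 1

/-- `m(V) = inf { I(u;V)/‖u‖_∞² ; u ∈ H¹(ℝ), u ≢ 0 }`, as a value in `[-∞,∞)` (extended reals). -/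
noncomputable def mB (V : BddSymmBilinearForm) : EReal :=
  sInf {r : EReal | ∃ u : ℝ → ℝ, IsH1 u ∧ u ≠ 0 ∧
    r = ((IB V u / (supNorm u) ^ 2 : ℝ) : EReal)}

/-- `F(a;V) = inf { I(u;V) ; u ∈ K_a }`, as a value in `[-∞,∞)` (extended reals). -/
noncomputable def FB (V : BddSymmBilinearForm) (a : ℝ) : EReal :=
  sInf {r : EReal | ∃ u : ℝ → ℝ, InKa a u ∧ r = ((IB V u : ℝ) : EReal)}

/-!
An `H¹` function is `1/2`-Hölder continuous by the Cauchy-Schwarz inequality, and a uniformly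
continuous `L²` function vanishes at infinity, so `|u|` attains its supremum at some point `a`.
Since `u ↦ I(u;V)` is homogeneous of degree two, `R(u;V) = I(u / u(a);V)` with `u / u(a) ∈ K_a`;
dividing by `u(a)` rather than by `‖u‖_∞` also corrects the sign. Conversely `R = I` on every `K_a`.
-/

open scoped ENNReal

theorem tendsto_cocompact_zero_of_uniformContinuous_of_memLp {X E : Type*} [MetricSpace X]
    [ProperSpace X] [MeasurableSpace X] [OpensMeasurableSpace X] [NormedAddCommGroup E]
    {μ : Measure X} [μ.InnerRegularCompactLTTop] {p : ℝ≥0∞} {f : X → E}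
    (hμ : ∀ δ > 0, 0 < ⨅ x, μ (Metric.ball x δ)) (hf : UniformContinuous f)
    (hfp : MemLp f p μ) (hp₀ : p ≠ 0) (hp : p ≠ ∞) :
    Tendsto f (cocompact X) (𝓝 0) := by
  refine Metric.tendsto_nhds.2 fun ε hε => ?_
  obtain ⟨δ, hδ, hfδ⟩ := Metric.uniformContinuous_iff.1 hf (ε / 2) (half_pos hε)
  let A : Set X := {x | ε / 2 ≤ ‖f x‖}
  have hA : MeasurableSet A := (isClosed_le continuous_const hf.continuous.norm).measurableSet
  have hμA : μ A ≠ ∞ :=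
    (hfp.meas_ge_lt_top hp₀ hp (ε := ⟨ε / 2, (half_pos hε).le⟩)
      (NNReal.coe_ne_zero.1 (half_pos hε).ne')).ne
  -- Outside the compact set `K` too little of `A` is left to contain a ball of radius `δ`.
  obtain ⟨K, -, hK, hAK⟩ := hA.exists_isCompact_sdiff_lt hμA (hμ δ hδ).ne'
  filter_upwards [(hK.cthickening (r := δ)).compl_mem_cocompact] with x hx
  by_contra! hfx
  have hball : Metric.ball x δ ⊆ A \ K := fun y hy => by
    refine ⟨?_, fun hyK => hx (Metric.mem_cthickening_of_dist_le x y δ K hyK ?_)⟩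
    · have hfy : ‖f x - f y‖ < ε / 2 := by
        rw [← dist_eq_norm, dist_comm]
        exact hfδ hy
      rw [dist_zero_right] at hfx
      change ε / 2 ≤ ‖f y‖
      linarith [norm_sub_norm_le (f x) (f y)]
    · exact (Metric.mem_ball'.1 hy).le
  exact hAK.not_ge ((iInf_le _ x).trans (measure_mono hball))

theorem exists_forall_norm_le_of_tendsto_cocompact_zero {X E : Type*} [TopologicalSpace X]
    [Nonempty X] [SeminormedAddCommGroup E] {f : X → E} (hf : Continuous f)
    (hf₀ : Tendsto f (cocompact X) (𝓝 0)) : ∃ a, ∀ x, ‖f x‖ ≤ ‖f a‖ := by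
  by_cases h : ∃ b, 0 < ‖f b‖
  · obtain ⟨b, hb⟩ := h
    have hsmall : ∀ᶠ x in cocompact X, ‖f x‖ < ‖f b‖ :=
      hf₀.norm.eventually_lt_const (by rwa [norm_zero])
    exact hf.norm.exists_forall_ge' b (hsmall.mono fun _ => le_of_lt)
  · push Not at h
    exact ⟨Classical.arbitrary X, fun x => (h x).trans (norm_nonneg _)⟩

section Primitive

variable {E : Type*} [NormedAddCommGroup E] [NormedSpace ℝ E] {g : ℝ → E} {p : ℝ≥0∞}

theorem enorm_intervalIntegral_le_eLpNorm_mul_rpow (hg : AEStronglyMeasurable g) (hp : 1 ≤ p)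
    (x y : ℝ) :
    ‖∫ t in x..y, g t‖ₑ ≤ eLpNorm g p * edist x y ^ (1 - 1 / p.toReal) := by
  let ν := volume.restrict (Set.uIoc x y)
  have hν : ν Set.univ = edist x y := by
    rw [Measure.restrict_apply_univ, Real.volume_uIoc, edist_comm, edist_dist, Real.dist_eq]
  calc ‖∫ t in x..y, g t‖ₑ = ‖∫ t, g t ∂ν‖ₑ := by
        rw [← ofReal_norm, ← ofReal_norm, intervalIntegral.norm_intervalIntegral_eq]
    _ ≤ eLpNorm g 1 ν := by
        rw [eLpNorm_one_eq_lintegral_enorm]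
        exact enorm_integral_le_lintegral_enorm g
    _ ≤ eLpNorm g p ν * edist x y ^ (1 - 1 / p.toReal) := by
        have hgν : AEStronglyMeasurable g ν := hg.restrict
        simpa [hν] using eLpNorm_le_eLpNorm_mul_rpow_measure_univ hp hgν
    _ ≤ eLpNorm g p volume * edist x y ^ (1 - 1 / p.toReal) := by
        gcongr
        exact Measure.restrict_le_self

-- For `p = ∞` the convention `1 / ∞.toReal = 0` gives the right exponent `1`.
theorem holderWith_intervalIntegral_of_memLp (hg : MemLp g p) (hp : 1 ≤ p) (a : ℝ) :
    HolderWith (eLpNorm g p).toNNReal (1 - 1 / p.toReal).toNNReal (fun x => ∫ t in a..x, g t) := by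
  intro x y
  have hint (b c : ℝ) : IntervalIntegrable g volume b c :=
    ((hg.locallyIntegrable hp).integrableOn_isCompact isCompact_uIcc).intervalIntegrable
  have hexp : 0 ≤ 1 - 1 / p.toReal := by
    rw [sub_nonneg, one_div, ← ENNReal.toReal_inv]
    exact ENNReal.toReal_le_of_le_ofReal zero_le_one (by simpa using hp)
  rw [ENNReal.coe_toNNReal hg.eLpNorm_ne_top, Real.coe_toNNReal _ hexp, edist_comm x y,
    edist_eq_enorm_sub, intervalIntegral.integral_interval_sub_left (hint a x) (hint a y)]
  exact enorm_intervalIntegral_le_eLpNorm_mul_rpow hg.aestronglyMeasurable hp y x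

end Primitive

theorem supNorm_eq_abs_of_forall_abs_le {u : ℝ → ℝ} {a : ℝ} (ha : ∀ x, |u x| ≤ |u a|) :
    supNorm u = |u a| :=
  le_antisymm (ciSup_le ha) (le_ciSup (f := fun x => |u x|) ⟨|u a|, Set.forall_mem_range.2 ha⟩ a)

theorem supNorm_smul (c : ℝ) (u : ℝ → ℝ) : supNorm (c • u) = |c| * supNorm u := by
  simp only [supNorm, Real.mul_iSup_of_nonneg (abs_nonneg c), Pi.smul_apply, smul_eq_mul, abs_mul]

theorem energy_smul (c : ℝ) (u : ℝ → ℝ) : energy (c • u) = c ^ 2 * energy u := by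
  simp only [energy, deriv_const_smul_field, smul_eq_mul, mul_pow, integral_const_mul]

theorem InKa.ne_zero {a : ℝ} {u : ℝ → ℝ} (hu : InKa a u) : u ≠ 0 := by
  rintro rfl
  exact zero_ne_one hu.2.1

namespace IsH1

variable {u : ℝ → ℝ}

theorem smul (hu : IsH1 u) (c : ℝ) : IsH1 (c • u) := by
  obtain ⟨hcont, hL2, u', hu', hprim⟩ := hu
  refine ⟨hcont.const_smul c, hL2.const_smul c, c • u', hu'.const_smul c, fun x => ?_⟩
  simp only [Pi.smul_apply, smul_eq_mul, intervalIntegral.integral_const_mul]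
  rw [hprim x, mul_add]

theorem exists_holderWith_half (hu : IsH1 u) : ∃ C, HolderWith C (1 / 2) u := by
  obtain ⟨-, -, u', hu', hprim⟩ := hu
  refine ⟨(eLpNorm u' 2).toNNReal, fun x y => ?_⟩
  have hexp : (1 - 1 / (2 : ℝ≥0∞).toReal).toNNReal = 1 / 2 := by
    rw [ENNReal.toReal_ofNat, sub_half, Real.toNNReal_div zero_le_one, Real.toNNReal_one,
      Real.toNNReal_ofNat]
  rw [hprim x, hprim y, edist_add_left, ← hexp]
  exact holderWith_intervalIntegral_of_memLp hu' one_le_two 0 x y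

theorem uniformContinuous (hu : IsH1 u) : UniformContinuous u := by
  obtain ⟨C, hC⟩ := hu.exists_holderWith_half
  exact hC.uniformContinuous one_half_pos

theorem tendsto_cocompact_zero (hu : IsH1 u) : Tendsto u (cocompact ℝ) (𝓝 0) :=
  tendsto_cocompact_zero_of_uniformContinuous_of_memLp (fun δ hδ => by simpa using hδ)
    hu.uniformContinuous hu.2.1 two_ne_zero ENNReal.ofNat_ne_top

theorem exists_forall_abs_le (hu : IsH1 u) : ∃ a, ∀ x, |u x| ≤ |u a| :=
  exists_forall_norm_le_of_tendsto_cocompact_zero hu.1 hu.tendsto_cocompact_zero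

theorem inKa_inv_smul (hu : IsH1 u) {a : ℝ} (ha₀ : u a ≠ 0) (ha : ∀ x, |u x| ≤ |u a|) :
    InKa a ((u a)⁻¹ • u) := by
  refine ⟨hu.smul _, inv_mul_cancel₀ ha₀, ?_⟩
  rw [supNorm_smul, supNorm_eq_abs_of_forall_abs_le ha, abs_inv,
    inv_mul_cancel₀ (abs_ne_zero.2 ha₀)]

end IsH1

theorem IB_smul (V : BddSymmBilinearForm) (c : ℝ) {u : ℝ → ℝ} (hu : IsH1 u) :
    IB V (c • u) = c ^ 2 * IB V u := by
  have hcu : IsH1 (c • u) := hu.smul c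
  have hV : V.B (c • u) (c • u) = c ^ 2 * V.B u u := by
    rw [V.smul_left c u _ hu hcu, V.symm u _ hu hcu, V.smul_left c u u hu hu, sq, mul_assoc]
  rw [IB, IB, energy_smul, hV, mul_add]

theorem decomposition_principle_general (J : (ℝ → ℝ) → ℝ)
    (hJ : ∀ (c : ℝ) (u : ℝ → ℝ), IsH1 u → J (c • u) = c ^ 2 * J u) :
    sInf {r : EReal | ∃ u : ℝ → ℝ, IsH1 u ∧ u ≠ 0 ∧ r = ((J u / supNorm u ^ 2 : ℝ) : EReal)} =
      ⨅ a : ℝ, sInf {r : EReal | ∃ u : ℝ → ℝ, InKa a u ∧ r = ((J u : ℝ) : EReal)} := by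
  apply le_antisymm
  · refine le_iInf fun a => le_sInf ?_
    rintro _ ⟨u, hu, rfl⟩
    exact sInf_le ⟨u, hu.1, hu.ne_zero, by rw [hu.2.2, one_pow, div_one]⟩
  · refine le_sInf ?_
    rintro _ ⟨u, hu, hu₀, rfl⟩
    obtain ⟨a, ha⟩ := hu.exists_forall_abs_le
    have ha₀ : u a ≠ 0 := fun h => hu₀ (funext fun x => by simpa [h] using ha x)
    have hquot : J u / supNorm u ^ 2 = J ((u a)⁻¹ • u) := by
      rw [hJ _ u hu, supNorm_eq_abs_of_forall_abs_le ha, sq_abs, inv_pow, div_eq_inv_mul]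
    exact (iInf_le _ a).trans (sInf_le ⟨(u a)⁻¹ • u, hu.inKa_inv_smul ha₀ ha, by rw [hquot]⟩)

/-- **Decomposition principle.** For any bounded symmetric bilinear form `V` on `H¹(ℝ)`,
`m(V) = inf_{a ∈ ℝ} F(a;V)` (both sides taken in `[-∞,∞)`). -/
theorem decomposition_principle (V : BddSymmBilinearForm) :
    mB V = ⨅ a : ℝ, FB V a :=
  decomposition_principle_general (IB V) fun c _ hu => IB_smul V c hu
end

section
/- Let V ∈ L^∞(ℝ) with v₀ := ess inf_{x∈ℝ} V(x) > 0, and fix a ∈ ℝ. Then there exists a unique minimizer u_a ∈ K_a of the functional u ↦ ‖u‖_V² over K_a, i.e., u_a ∈ K_a satisfies ‖u_a‖_V² = inf{ ‖u‖_V² : u ∈ K_a }, and any other element of K_a attaining this infimum equals u_a. -/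
open MeasureTheory Filter Real Topology

/-- `I(u;V) = ∫_ℝ (|u'(x)|² + V(x)|u(x)|²) dx` for a potential `V : ℝ → ℝ`. -/
noncomputable def IV (V : ℝ → ℝ) (u : ℝ → ℝ) : ℝ :=
  ∫ x : ℝ, ((deriv u x) ^ 2 + V x * (u x) ^ 2)

/-- `F(a;V) = inf { I(u;V) ; u ∈ K_a }`. -/
noncomputable def FV (V : ℝ → ℝ) (a : ℝ) : ℝ :=
  sInf {r : ℝ | ∃ u : ℝ → ℝ, InKa a u ∧ r = IV V u}

/-- `m(V) = inf { I(u;V)/‖u‖_∞² ; u ∈ H¹(ℝ), u ≢ 0 }`. -/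
noncomputable def mV (V : ℝ → ℝ) : ℝ :=
  sInf {r : ℝ | ∃ u : ℝ → ℝ, IsH1 u ∧ u ≠ 0 ∧ r = IV V u / (supNorm u) ^ 2}

/-!
Since `V` is bounded above and below, `V dx` and `dx` have the same square-integrable functions, and
`u ↦ (u, u')` embeds `K_a` into the Hilbert space `L²(V dx) × L²(dx)` so that the product norm is
`‖u‖_V`. As `u(a) = 1` is prescribed, `u'` determines `u`, and each value `u(x) = 1 + ∫_a^x u'` is a
continuous affine function of `u'`. The bounds `|u(x)| ≤ 1` hence cut out a closed convex set, which
has exactly one element of minimal norm.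
-/

section MinimalNorm

variable {F : Type*} [NormedAddCommGroup F]

theorem eq_of_isMinOn_norm_of_norm_eq [NormedSpace ℝ F] [StrictConvexSpace ℝ F] {K : Set F}
    (hK : Convex ℝ K) {p q : F} (hp : p ∈ K) (hq : q ∈ K) (hmin : IsMinOn norm K p)
    (hpq : ‖p‖ = ‖q‖) : p = q := by
  by_contra hne
  have hmid : (1 / 2 : ℝ) • (p + q) ∈ K := by
    rw [smul_add]
    exact hK hp hq (by norm_num) (by norm_num) (by norm_num)
  exact ((norm_midpoint_lt_iff hpq).2 hne).not_ge (isMinOn_iff.1 hmin _ hmid)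

theorem exists_isMinOn_norm [InnerProductSpace ℝ F] {K : Set F} (hne : K.Nonempty)
    (hcomplete : IsComplete K) (hconv : Convex ℝ K) : ∃ p ∈ K, IsMinOn norm K p := by
  obtain ⟨p, hp, hmin⟩ := exists_norm_eq_iInf_of_complete_convex hne hcomplete hconv 0
  simp only [zero_sub, norm_neg] at hmin
  have hbdd : BddBelow (Set.range fun q : K => ‖(q : F)‖) :=
    ⟨0, Set.forall_mem_range.2 fun _ => norm_nonneg _⟩
  exact ⟨p, hp, isMinOn_iff.2 fun q hq => hmin.trans_le (ciInf_le hbdd ⟨q, hq⟩)⟩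

theorem exists_unique_minimizer_of_norm_sq [InnerProductSpace ℝ F] {K : Set F} (hne : K.Nonempty)
    (hcomplete : IsComplete K) (hconv : Convex ℝ K) {X : Type*} {S : Set X} {J : X → ℝ} {Φ : F → X}
    (hΦ : Φ '' K = S) (hJ : ∀ p ∈ K, J (Φ p) = ‖p‖ ^ 2) :
    ∃ u ∈ S, J u = sInf {r | ∃ v ∈ S, r = J v} ∧
      ∀ v ∈ S, J v = sInf {r | ∃ v ∈ S, r = J v} → v = u := by
  subst hΦ
  obtain ⟨p, hp, hmin⟩ := exists_isMinOn_norm hne hcomplete hconv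
  have hinf : sInf {r | ∃ v ∈ Φ '' K, r = J v} = ‖p‖ ^ 2 := by
    refine IsLeast.csInf_eq ⟨⟨Φ p, Set.mem_image_of_mem Φ hp, (hJ p hp).symm⟩, ?_⟩
    rintro _ ⟨_, ⟨q, hq, rfl⟩, rfl⟩
    rw [hJ q hq]
    exact pow_le_pow_left₀ (norm_nonneg p) (isMinOn_iff.1 hmin q hq) 2
  refine ⟨Φ p, Set.mem_image_of_mem Φ hp, (hJ p hp).trans hinf.symm, ?_⟩
  rintro _ ⟨q, hq, rfl⟩ hq_min
  have hnorm : ‖p‖ ^ 2 = ‖q‖ ^ 2 := by rw [← hinf, ← hq_min, hJ q hq]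
  rw [eq_of_isMinOn_norm_of_norm_eq hconv hp hq hmin
    ((sq_eq_sq₀ (norm_nonneg p) (norm_nonneg q)).1 hnorm)]

end MinimalNorm

section WeightedMeasure

variable {α : Type*} {m : MeasurableSpace α} {μ : Measure α} {V : α → ℝ}

/-- The measure `V dμ`; the negative part of `V` is discarded. -/
noncomputable def weightedMeasure (μ : Measure α) (V : α → ℝ) : Measure α :=
  μ.withDensity fun x => ENNReal.ofReal (V x)

theorem weightedMeasure_le_smul {M : ℝ} (hM : ∀ᵐ x ∂μ, V x ≤ M) :
    weightedMeasure μ V ≤ ENNReal.ofReal M • μ := by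
  rw [← withDensity_const]
  exact withDensity_mono (hM.mono fun x hx => ENNReal.ofReal_le_ofReal hx)

theorem le_smul_weightedMeasure {c : ℝ} (hc : 0 < c) (hcV : ∀ᵐ x ∂μ, c ≤ V x) :
    μ ≤ (ENNReal.ofReal c)⁻¹ • weightedMeasure μ V := by
  have hle : ENNReal.ofReal c • μ ≤ weightedMeasure μ V := by
    rw [← withDensity_const]
    exact withDensity_mono (hcV.mono fun x hx => ENNReal.ofReal_le_ofReal hx)
  calc μ = (ENNReal.ofReal c)⁻¹ • ENNReal.ofReal c • μ := by
        rw [smul_smul, ENNReal.inv_mul_cancel (ENNReal.ofReal_pos.2 hc).ne' ENNReal.ofReal_ne_top,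
          one_smul]
    _ ≤ (ENNReal.ofReal c)⁻¹ • weightedMeasure μ V := by gcongr

theorem integral_weightedMeasure (hV : AEMeasurable V μ) (hV0 : 0 ≤ᵐ[μ] V) (f : α → ℝ) :
    ∫ x, f x ∂weightedMeasure μ V = ∫ x, V x * f x ∂μ := by
  rw [weightedMeasure, integral_withDensity_eq_integral_toReal_smul₀ hV.ennreal_ofReal
    (ae_of_all _ fun _ => ENNReal.ofReal_lt_top)]
  refine integral_congr_ae (hV0.mono fun x hx => ?_)
  simp only [ENNReal.toReal_ofReal hx, smul_eq_mul]

theorem integrable_weightedMeasure_iff (hV : AEMeasurable V μ) (hV0 : 0 ≤ᵐ[μ] V) {f : α → ℝ} :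
    Integrable f (weightedMeasure μ V) ↔ Integrable (fun x => V x * f x) μ := by
  rw [weightedMeasure, integrable_withDensity_iff_integrable_smul₀' hV.ennreal_ofReal
    (ae_of_all _ fun _ => ENNReal.ofReal_lt_top)]
  refine integrable_congr (hV0.mono fun x hx => ?_)
  simp only [ENNReal.toReal_ofReal hx, smul_eq_mul]

theorem ae_essInf_le_of_memLp_top (hV : MemLp V ⊤ μ) : ∀ᵐ x ∂μ, essInf V μ ≤ V x := by
  refine ae_essInf_le ⟨-lpNorm V ⊤ μ, eventually_map.2 ?_⟩
  filter_upwards [ae_le_lpNorm_exponent_top hV] with x hx using (abs_le.1 hx).1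

end WeightedMeasure

theorem norm_sq_eq_integral_sq {α : Type*} {m : MeasurableSpace α} {μ : Measure α}
    (f : Lp ℝ 2 μ) : ‖f‖ ^ 2 = ∫ x, f x ^ 2 ∂μ := by
  rw [← real_inner_self_eq_norm_sq, L2.inner_def]
  simp only [real_inner_self_eq_norm_sq, norm_eq_abs, sq_abs]

section Primitive

variable {E : Type*} [NormedAddCommGroup E] {a b : ℝ} {c : E} {g : ℝ → E}

theorem intervalIntegrable_of_locallyIntegrable {μ : Measure ℝ} (hg : LocallyIntegrable g μ)
    (a b : ℝ) : IntervalIntegrable g μ a b :=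
  intervalIntegrable_iff.2 <|
    (hg.integrableOn_isCompact isCompact_uIcc).mono_set Set.uIoc_subset_uIcc

variable [NormedSpace ℝ E]

/-- The primitive of `g` with value `c` at `a`. -/
noncomputable def primitive (a : ℝ) (c : E) (g : ℝ → E) (x : ℝ) : E := c + ∫ t in a..x, g t

theorem primitive_self : primitive a c g a = c := by
  rw [primitive, intervalIntegral.integral_same, add_zero]

theorem primitive_rebase (hg : LocallyIntegrable g) (a b : ℝ) :
    primitive b (primitive a c g b) g = primitive a c g := by
  ext x
  rw [primitive, primitive, primitive, add_assoc,
    intervalIntegral.integral_add_adjacent_intervals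
      (intervalIntegrable_of_locallyIntegrable hg a b)
      (intervalIntegrable_of_locallyIntegrable hg b x)]

theorem primitive_congr_ae {h : ℝ → E} (hgh : g =ᵐ[volume] h) :
    primitive a c g = primitive a c h := by
  ext x
  rw [primitive, primitive, intervalIntegral.integral_congr_ae (hgh.mono fun t ht _ => ht)]

theorem continuous_primitive (hg : LocallyIntegrable g) : Continuous (primitive a c g) :=
  continuous_const.add <|
    intervalIntegral.continuous_primitive (intervalIntegrable_of_locallyIntegrable hg) a

theorem ae_deriv_primitive [CompleteSpace E] (hg : LocallyIntegrable g) :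
    deriv (primitive a c g) =ᵐ[volume] g := by
  filter_upwards [LocallyIntegrable.ae_hasDerivAt_integral hg] with x hx
  exact ((hx a).const_add c).deriv

end Primitive

section IsH1

variable {u g : ℝ → ℝ} {a c : ℝ}

theorem isH1_primitive (hg : MemLp g 2) (hu : MemLp (primitive a c g) 2) :
    IsH1 (primitive a c g) := by
  have hg_loc := hg.locallyIntegrable one_le_two
  exact ⟨continuous_primitive hg_loc, hu, g, hg,
    fun x => (congrFun (primitive_rebase hg_loc a 0) x).symm⟩

theorem IsH1.exists_eq_primitive (hu : IsH1 u) (a : ℝ) :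
    ∃ g : ℝ → ℝ, MemLp g 2 ∧ u = primitive a (u a) g := by
  obtain ⟨-, -, g, hg, hug⟩ := hu
  have hu0 : u = primitive 0 (u 0) g := funext hug
  refine ⟨g, hg, ?_⟩
  rw [congrFun hu0 a, primitive_rebase (hg.locallyIntegrable one_le_two), ← hu0]

theorem IsH1.memLp_deriv (hu : IsH1 u) : MemLp (deriv u) 2 := by
  obtain ⟨g, hg, hug⟩ := hu.exists_eq_primitive 0
  rw [hug]
  exact (memLp_congr_ae (ae_deriv_primitive (hg.locallyIntegrable one_le_two))).2 hg

theorem isH1_of_contDiff_of_hasCompactSupport (hu : ContDiff ℝ 1 u) (hsupp : HasCompactSupport u) :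
    IsH1 u := by
  have hderiv : Continuous (deriv u) := hu.continuous_deriv_one
  refine ⟨hu.continuous, hu.continuous.memLp_of_hasCompactSupport hsupp, deriv u,
    hderiv.memLp_of_hasCompactSupport hsupp.deriv, fun x => ?_⟩
  rw [intervalIntegral.integral_deriv_eq_sub
    (fun t _ => hu.differentiable one_ne_zero t) (hderiv.intervalIntegrable 0 x)]
  ring

end IsH1

section Admissible

variable {u : ℝ → ℝ} {a : ℝ}

theorem supNorm_eq_abs_iff (ha : u a ≠ 0) : supNorm u = |u a| ↔ ∀ x, |u x| ≤ |u a| := by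
  refine ⟨fun h x => ?_, fun h => (ciSup_le h).antisymm (le_ciSup ⟨_, Set.forall_mem_range.2 h⟩ a)⟩
  have hbdd : BddAbove (Set.range fun x => |u x|) := by
    by_contra hunbdd
    -- The supremum of an unbounded set of reals is `0`.
    rw [supNorm, Real.iSup_of_not_bddAbove hunbdd] at h
    exact ha (abs_eq_zero.1 h.symm)
  exact (le_ciSup hbdd x).trans_eq h

theorem inKa_iff : InKa a u ↔ IsH1 u ∧ u a = 1 ∧ ∀ x, u x ∈ Set.Icc (-1) 1 := by
  refine and_congr_right fun _ => and_congr_right fun ha => ?_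
  simpa only [ha, abs_one, abs_le] using! supNorm_eq_abs_iff (ha.trans_ne one_ne_zero)

theorem nonempty_setOf_inKa (a : ℝ) : {u | InKa a u}.Nonempty := by
  let φ : ContDiffBump a := default
  exact ⟨φ, inKa_iff.2 ⟨isH1_of_contDiff_of_hasCompactSupport φ.contDiff φ.hasCompactSupport,
    φ.one_of_mem_closedBall (Metric.mem_closedBall_self φ.rIn_pos.le),
    fun x => ⟨neg_one_lt_zero.le.trans φ.nonneg, φ.le_one⟩⟩⟩

theorem IV_eq_energy_add {V : ℝ → ℝ} (hV : AEMeasurable V) (hV0 : 0 ≤ᵐ[volume] V) (hu : IsH1 u)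
    (huV : MemLp u 2 (weightedMeasure volume V)) :
    IV V u = energy u + ∫ x, u x ^ 2 ∂weightedMeasure volume V := by
  rw [integral_weightedMeasure hV hV0, energy, IV]
  exact integral_add hu.memLp_deriv.integrable_sq
    ((integrable_weightedMeasure_iff hV hV0).1 huV.integrable_sq)

end Admissible

section IntervalIntegralCLM

variable {𝕜 : Type*} [RCLike 𝕜] (μ : Measure ℝ) [IsLocallyFiniteMeasure μ]

/-- Integration over `a..b` as a continuous linear functional on `L²(μ)`. -/
noncomputable def intervalIntegralCLM (a b : ℝ) : Lp 𝕜 2 μ →L[𝕜] 𝕜 :=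
  innerSL 𝕜 (indicatorConstLp 2 (measurableSet_Ioc (a := a) (b := b)) measure_Ioc_lt_top.ne 1) -
    innerSL 𝕜 (indicatorConstLp 2 (measurableSet_Ioc (a := b) (b := a)) measure_Ioc_lt_top.ne 1)

theorem intervalIntegralCLM_apply (a b : ℝ) (g : Lp 𝕜 2 μ) :
    intervalIntegralCLM μ a b g = ∫ t in a..b, g t ∂μ := by
  simp only [intervalIntegralCLM, sub_apply, innerSL_apply_apply, L2.inner_indicatorConstLp_one,
    intervalIntegral]

end IntervalIntegralCLM

theorem continuous_primitive_apply (a c x : ℝ) :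
    Continuous fun g : Lp ℝ 2 (volume : Measure ℝ) => primitive a c g x := by
  simp only [primitive, ← intervalIntegralCLM_apply]
  fun_prop

theorem primitive_convexCombo (a c x : ℝ) (g h : Lp ℝ 2 (volume : Measure ℝ)) {s t : ℝ}
    (hst : s + t = 1) :
    primitive a c (s • g + t • h : Lp ℝ 2 (volume : Measure ℝ)) x =
      s • primitive a c g x + t • primitive a c h x := by
  simp only [primitive, ← intervalIntegralCLM_apply, map_add, map_smul, smul_eq_mul]
  linear_combination -c * hst

/-- The pairs `(f, g)` in `L²(ν) × L²(dx)` such that the primitive of `g` with value `c` at `a`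
represents `f` and takes values in `S`. With `ν = V dx`, `c = 1` and `S = [-1, 1]` this is the image
of `K_a` under `u ↦ (u, u')`. -/
def primitiveGraph (ν : Measure ℝ) (a c : ℝ) (S : Set ℝ) :
    Set (WithLp 2 (Lp ℝ 2 ν × Lp ℝ 2 (volume : Measure ℝ))) :=
  {p | p.fst =ᵐ[ν] primitive a c p.snd ∧ ∀ x, primitive a c p.snd x ∈ S}

section PrimitiveGraph

variable {ν : Measure ℝ} {a c : ℝ} {S : Set ℝ}

theorem convex_primitiveGraph (hS : Convex ℝ S) : Convex ℝ (primitiveGraph ν a c S) := by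
  rintro p ⟨hp_rep, hp_mem⟩ q ⟨hq_rep, hq_mem⟩ s t hs ht hst
  have hprim := fun x => primitive_convexCombo a c x p.snd q.snd hst
  refine ⟨?_, fun x => (hprim x).symm ▸ hS (hp_mem x) (hq_mem x) hs ht hst⟩
  filter_upwards [hp_rep, hq_rep, Lp.coeFn_add (s • p.fst) (t • q.fst), Lp.coeFn_smul s p.fst,
    Lp.coeFn_smul t q.fst] with x hpx hqx hadd hsp htq
  calc (s • p.fst + t • q.fst) x = s • p.fst x + t • q.fst x := by
        rw [hadd, Pi.add_apply, hsp, htq, Pi.smul_apply, Pi.smul_apply]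
    _ = primitive a c (s • p + t • q).snd x := by rw [hpx, hqx]; exact (hprim x).symm

theorem isClosed_primitiveGraph (hS : IsClosed S) : IsClosed (primitiveGraph ν a c S) := by
  refine IsSeqClosed.isClosed fun p q hp hpq => ?_
  have hfst : Tendsto (fun n => (p n).fst) atTop (𝓝 q.fst) :=
    ((WithLp.prod_continuous_ofLp 2 _ _).fst.tendsto q).comp hpq
  have hsnd : Tendsto (fun n => (p n).snd) atTop (𝓝 q.snd) :=
    ((WithLp.prod_continuous_ofLp 2 _ _).snd.tendsto q).comp hpq
  have hprim (x : ℝ) :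
      Tendsto (fun n => primitive a c (p n).snd x) atTop (𝓝 (primitive a c q.snd x)) :=
    ((continuous_primitive_apply a c x).tendsto _).comp hsnd
  refine ⟨?_, fun x => hS.mem_of_tendsto (hprim x) (Eventually.of_forall fun n => (hp n).2 x)⟩
  obtain ⟨φ, hφ, hae⟩ := (tendstoInMeasure_of_tendsto_Lp hfst).exists_seq_tendsto_ae
  filter_upwards [hae, ae_all_iff.2 fun n => (hp n).1] with x hx hrep
  refine tendsto_nhds_unique hx ?_
  simpa only [hrep, Function.comp_def] using (hprim x).comp hφ.tendsto_atTop

theorem norm_sq_of_mem_primitiveGraph {p : WithLp 2 (Lp ℝ 2 ν × Lp ℝ 2 (volume : Measure ℝ))}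
    (hp : p ∈ primitiveGraph ν a c S) :
    ‖p‖ ^ 2 = energy (primitive a c p.snd) + ∫ x, primitive a c p.snd x ^ 2 ∂ν := by
  have hderiv : deriv (primitive a c p.snd) =ᵐ[volume] p.snd :=
    ae_deriv_primitive ((Lp.memLp p.snd).locallyIntegrable one_le_two)
  rw [WithLp.prod_norm_sq_eq_of_L2, norm_sq_eq_integral_sq, norm_sq_eq_integral_sq, add_comm,
    energy]
  congr 1
  · exact integral_congr_ae (hderiv.symm.pow_const 2)
  · exact integral_congr_ae (hp.1.pow_const 2)

theorem IV_eq_norm_sq {V : ℝ → ℝ} (hV : AEMeasurable V) (hV0 : 0 ≤ᵐ[volume] V)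
    {p : WithLp 2 (Lp ℝ 2 (weightedMeasure volume V) × Lp ℝ 2 (volume : Measure ℝ))}
    (hp : p ∈ primitiveGraph (weightedMeasure volume V) a c S) (hu : IsH1 (primitive a c p.snd)) :
    IV V (primitive a c p.snd) = ‖p‖ ^ 2 := by
  rw [norm_sq_of_mem_primitiveGraph hp]
  exact IV_eq_energy_add hV hV0 hu ((memLp_congr_ae hp.1).1 (Lp.memLp p.fst))

theorem inKa_of_mem_primitiveGraph {C : ENNReal} (hC : C ≠ ⊤) (hν : volume ≤ C • ν)
    {p : WithLp 2 (Lp ℝ 2 ν × Lp ℝ 2 (volume : Measure ℝ))}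
    (hp : p ∈ primitiveGraph ν a 1 (Set.Icc (-1) 1)) : InKa a (primitive a 1 p.snd) := by
  have hL2 : MemLp (primitive a 1 p.snd) 2 :=
    ((memLp_congr_ae hp.1).1 (Lp.memLp p.fst)).of_measure_le_smul hC hν
  exact inKa_iff.2 ⟨isH1_primitive (Lp.memLp p.snd) hL2, primitive_self, hp.2⟩

theorem InKa.exists_mem_primitiveGraph {C : ENNReal} (hC : C ≠ ⊤) (hν : ν ≤ C • volume)
    {u : ℝ → ℝ} (hu : InKa a u) :
    ∃ p ∈ primitiveGraph ν a 1 (Set.Icc (-1) 1), u = primitive a 1 p.snd := by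
  obtain ⟨hH1, ha, hbound⟩ := inKa_iff.1 hu
  obtain ⟨g, hg, hug⟩ := hH1.exists_eq_primitive a
  have hrep : u = primitive a 1 (hg.toLp g) := by
    rw [primitive_congr_ae hg.coeFn_toLp, ← ha, ← hug]
  have huν : MemLp u 2 ν := hH1.2.1.of_measure_le_smul hC hν
  refine ⟨WithLp.toLp 2 (huν.toLp u, hg.toLp g), ⟨?_, fun x => hrep ▸ hbound x⟩, hrep⟩
  exact huν.coeFn_toLp.trans (Eventually.of_forall (congrFun hrep))

theorem image_primitiveGraph_eq_setOf_inKa {C D : ENNReal} (hC : C ≠ ⊤) (hD : D ≠ ⊤)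
    (hle : ν ≤ C • volume) (hge : volume ≤ D • ν) :
    (fun p => primitive a 1 p.snd) '' primitiveGraph ν a 1 (Set.Icc (-1) 1) = {u | InKa a u} := by
  ext u
  constructor
  · rintro ⟨p, hp, rfl⟩
    exact inKa_of_mem_primitiveGraph hD hge hp
  · intro hu
    obtain ⟨p, hp, hup⟩ := InKa.exists_mem_primitiveGraph hC hle hu
    exact ⟨p, hp, hup.symm⟩

end PrimitiveGraph

/-- **Existence and uniqueness of the minimizer in `K_a`.**
For `V ∈ L^∞(ℝ)` with `ess inf V > 0` and any `a ∈ ℝ`, there is a unique `u_a ∈ K_a`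
with `‖u_a‖_V² = inf { ‖u‖_V² ; u ∈ K_a }`; any element of `K_a` attaining the
infimum equals `u_a`.  (Here `‖u‖_V² = I(u;V)`.) -/
theorem exists_unique_minimizer (V : ℝ → ℝ) (hV : MemLp V ⊤ (volume : Measure ℝ))
    (hpos : 0 < essInf V (volume : Measure ℝ)) (a : ℝ) :
    ∃ ua : ℝ → ℝ, InKa a ua ∧
      IV V ua = sInf {r : ℝ | ∃ u : ℝ → ℝ, InKa a u ∧ r = IV V u} ∧
      ∀ v : ℝ → ℝ, InKa a v →
        IV V v = sInf {r : ℝ | ∃ u : ℝ → ℝ, InKa a u ∧ r = IV V u} → v = ua := by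
  have hlower := ae_essInf_le_of_memLp_top hV
  have hupper : ∀ᵐ x, V x ≤ lpNorm V ⊤ volume :=
    (ae_le_lpNorm_exponent_top hV).mono fun x hx => (le_abs_self _).trans hx
  have hV0 : 0 ≤ᵐ[volume] V := hlower.mono fun x hx => hpos.le.trans hx
  have himage := image_primitiveGraph_eq_setOf_inKa (a := a) ENNReal.ofReal_ne_top
    (ENNReal.inv_ne_top.2 (ENNReal.ofReal_pos.2 hpos).ne')
    (weightedMeasure_le_smul hupper) (le_smul_weightedMeasure hpos hlower)
  have hne : (primitiveGraph (weightedMeasure volume V) a 1 (Set.Icc (-1) 1)).Nonempty :=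
    Set.image_nonempty.1 (himage ▸ nonempty_setOf_inKa a)
  exact exists_unique_minimizer_of_norm_sq hne
    (isClosed_primitiveGraph isClosed_Icc).isComplete
    (convex_primitiveGraph (convex_Icc (-1) 1)) himage
    fun p hp => IV_eq_norm_sq hV.aemeasurable hV0 hp (himage.subset ⟨p, hp, rfl⟩).1
end

section
/- Let V ∈ L^∞(ℝ) with v₀ := ess inf_{x∈ℝ} V(x) > 0, fix a ∈ ℝ, and let u_a ∈ K_a be the unique minimizer of u ↦ ‖u‖_V² over K_a. Then u_a ∈ W^{2,∞}(ℝ∖{a}) and u_a″(x) = V(x) u_a(x) for almost every x ∈ ℝ∖{a}. -/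
open MeasureTheory Filter Real Topology

/-!
Truncating at height `1` does not increase the energy, because `V ≥ 0`; hence a minimizer over
`K_a` also minimizes over all `u ∈ H¹(ℝ)` with `u a = 1`, where the constraint `‖u‖_∞ = 1` is gone
and the perturbations `u + ε φ` with `φ a = 0` are admissible. The minimizer is therefore a weak
solution of `u'' = V u` off the point `a`. By the du Bois-Reymond argument `u'` is, away from `a`,
a primitive of the bounded function `V u`. Finally `u'` is bounded, since on every interval of
length one the mean value theorem yields a point where `|u'| ≤ 2 ‖u‖_∞`.
-/

open Set
open scoped NNReal

section AbsolutelyContinuous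

lemma intervalIntegrable_of_locallyIntegrable_s2 {g : ℝ → ℝ} (hg : LocallyIntegrable g) (p q : ℝ) :
    IntervalIntegrable g volume p q :=
  (hg.integrableOn_isCompact isCompact_uIcc).intervalIntegrable

lemma continuous_primitive_of_locallyIntegrable {g : ℝ → ℝ} (hg : LocallyIntegrable g) (c : ℝ) :
    Continuous fun x => ∫ t in c..x, g t :=
  intervalIntegral.continuous_primitive (intervalIntegrable_of_locallyIntegrable_s2 hg) c

lemma ae_deriv_primitive_eq {g : ℝ → ℝ} (hg : LocallyIntegrable g) (c : ℝ) :
    ∀ᵐ x, deriv (fun y => ∫ t in c..y, g t) x = g x :=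
  (_root_.LocallyIntegrable.ae_hasDerivAt_integral hg).mono fun _ hx => (hx c).deriv

lemma absolutelyContinuousOnInterval_primitive {g : ℝ → ℝ} (hg : LocallyIntegrable g)
    (c p q : ℝ) : AbsolutelyContinuousOnInterval (fun x => ∫ t in c..x, g t) p q := by
  refine ((intervalIntegrable_of_locallyIntegrable_s2 hg (c ⊓ (p ⊓ q))
    (c ⊔ (p ⊔ q))).absolutelyContinuousOnInterval_intervalIntegral ?_).mono ?_
  · simp
  · exact uIcc_subset_uIcc (by simp) (by simp)

lemma absolutelyContinuousOnInterval_const {X : Type*} [PseudoMetricSpace X] (c : X) (p q : ℝ) :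
    AbsolutelyContinuousOnInterval (fun _ => c) p q := by
  simp [AbsolutelyContinuousOnInterval, tendsto_const_nhds]

lemma absolutelyContinuousOnInterval_lipschitz_comp {X Y : Type*} [PseudoMetricSpace X]
    [PseudoMetricSpace Y] {K : ℝ≥0} {T : X → Y} (hT : LipschitzWith K T) {f : ℝ → X} {p q : ℝ}
    (hf : AbsolutelyContinuousOnInterval f p q) : AbsolutelyContinuousOnInterval (T ∘ f) p q := by
  have hlim := Tendsto.const_mul (K : ℝ) hf
  rw [mul_zero] at hlim
  refine squeeze_zero (fun E => Finset.sum_nonneg fun _ _ => dist_nonneg) (fun E => ?_) hlim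
  rw [Finset.mul_sum]
  exact Finset.sum_le_sum fun _ _ => hT.dist_le_mul _ _

lemma integral_primitive_mul_eq_neg {f g : ℝ → ℝ} (hf : LocallyIntegrable f)
    (hg : LocallyIntegrable g) {p q : ℝ} (hg0 : ∫ t in p..q, g t = 0) :
    ∫ x in p..q, (∫ t in p..x, f t) * g x = -∫ x in p..q, f x * ∫ t in p..x, g t := by
  have hparts := (absolutelyContinuousOnInterval_primitive hf p p q).integral_mul_deriv_eq_deriv_mul
    (absolutelyContinuousOnInterval_primitive hg p p q)
  simp only [hg0, intervalIntegral.integral_same, mul_zero, sub_zero, zero_sub] at hparts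
  have hleft : ∫ x in p..q, (∫ t in p..x, f t) * g x =
      ∫ x in p..q, (∫ t in p..x, f t) * deriv (fun y => ∫ t in p..y, g t) x := by
    refine intervalIntegral.integral_congr_ae ?_
    filter_upwards [ae_deriv_primitive_eq hg p] with x hx _
    rw [hx]
  have hright : ∫ x in p..q, f x * ∫ t in p..x, g t =
      ∫ x in p..q, deriv (fun y => ∫ t in p..y, f t) x * ∫ t in p..x, g t := by
    refine intervalIntegral.integral_congr_ae ?_
    filter_upwards [ae_deriv_primitive_eq hf p] with x hx _
    rw [hx]
  rw [hleft, hright, hparts]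

lemma hasDerivAt_of_ae_deriv_eq {u v : ℝ → ℝ} {p q z : ℝ}
    (hu : AbsolutelyContinuousOnInterval u p q) (hv : Continuous v)
    (huv : ∀ᵐ x ∂volume.restrict (Ioc p q), deriv u x = v x) (hz : z ∈ Ioo p q) :
    HasDerivAt u (v z) z := by
  have hprim : HasDerivAt (fun x => u p + ∫ t in p..x, v t) (v z) z :=
    (hv.integral_hasStrictDerivAt p z).hasDerivAt.const_add (u p)
  refine hprim.congr_of_eventuallyEq ?_
  filter_upwards [isOpen_Ioo.mem_nhds hz] with x hx
  have hpx : AbsolutelyContinuousOnInterval u p x :=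
    hu.mono (uIcc_subset_uIcc_left (Icc_subset_uIcc (Ioo_subset_Icc_self hx)))
  have hint : ∫ t in p..x, deriv u t = ∫ t in p..x, v t := by
    refine intervalIntegral.integral_congr_ae_restrict ?_
    rw [uIoc_of_le hx.1.le]
    exact ae_restrict_of_ae_restrict_of_subset (Ioc_subset_Ioc_right hx.2.le) huv
  linarith [hpx.integral_deriv_eq_sub]

end AbsolutelyContinuous

section Measure

variable {α : Type*} [MeasurableSpace α] {μ : Measure α}

lemma ae_pos_of_essInf_pos {f : α → ℝ} (hf : MemLp f ⊤ μ) (hpos : 0 < essInf f μ) :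
    ∀ᵐ x ∂μ, 0 < f x :=
  ae_lt_of_lt_essInf hpos <| isBoundedUnder_of_eventually_ge <|
    (ae_le_lpNorm_exponent_top hf).mono fun _ hx => (abs_le.1 hx).1

lemma ae_eq_average_of_integral_mul_eq_zero [IsFiniteMeasure μ] {f : α → ℝ} (hf : MemLp f 2 μ)
    (h : ∀ g : α → ℝ, MemLp g 2 μ → ∫ x, g x ∂μ = 0 → ∫ x, f x * g x ∂μ = 0) :
    ∀ᵐ x ∂μ, f x = ⨍ y, f y ∂μ := by
  set c : ℝ := ⨍ y, f y ∂μ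
  have hg : MemLp (fun x => f x - c) 2 μ := hf.sub (memLp_const c)
  have hg0 : ∫ x, (f x - c) ∂μ = 0 := integral_sub_average μ f
  have hfg : Integrable (fun x => f x * (f x - c)) μ := hf.integrable_mul hg
  have hsq : ∫ x, (f x - c) ^ 2 ∂μ = 0 := by
    calc ∫ x, (f x - c) ^ 2 ∂μ = ∫ x, (f x * (f x - c) - c * (f x - c)) ∂μ := by
          congr with x; ring
      _ = ∫ x, f x * (f x - c) ∂μ - c * ∫ x, (f x - c) ∂μ := by
          rw [integral_sub hfg ((hg.integrable one_le_two).const_mul c), integral_const_mul]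
      _ = 0 := by rw [h _ hg hg0, hg0, mul_zero, sub_zero]
  rw [integral_eq_zero_iff_of_nonneg (fun _ => sq_nonneg _) hg.integrable_sq] at hsq
  filter_upwards [hsq] with x hx
  exact sub_eq_zero.1 (pow_eq_zero_iff two_ne_zero |>.1 hx)

end Measure

lemma norm_deriv_lipschitz_comp_le {F G : Type*} [NormedAddCommGroup F] [NormedSpace ℝ F]
    [NormedAddCommGroup G] [NormedSpace ℝ G] {K : ℝ≥0} {T : F → G} (hT : LipschitzWith K T)
    {f : ℝ → F} {x : ℝ} (hf : DifferentiableAt ℝ f x) :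
    ‖deriv (T ∘ f) x‖ ≤ K * ‖deriv f x‖ := by
  by_cases hTf : DifferentiableAt ℝ (T ∘ f) x
  · refine le_of_tendsto_of_tendsto' (hasDerivAt_iff_tendsto_slope.1 hTf.hasDerivAt).norm
      ((hasDerivAt_iff_tendsto_slope.1 hf.hasDerivAt).norm.const_mul (K : ℝ)) fun y => ?_
    simp only [slope, norm_smul, vsub_eq_sub, Function.comp_apply]
    calc ‖(y - x)⁻¹‖ * ‖T (f y) - T (f x)‖ ≤ ‖(y - x)⁻¹‖ * (K * ‖f y - f x‖) := by
          gcongr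
          exact hT.norm_sub_le _ _
      _ = K * (‖(y - x)⁻¹‖ * ‖f y - f x‖) := by ring
  · rw [deriv_zero_of_not_differentiableAt hTf, norm_zero]
    positivity

namespace IsH1

variable {u φ : ℝ → ℝ}

lemma memLp (hu : IsH1 u) : MemLp u 2 := hu.2.1

lemma absolutelyContinuousOnInterval (hu : IsH1 u) (p q : ℝ) :
    AbsolutelyContinuousOnInterval u p q := by
  obtain ⟨-, -, g, hg, hug⟩ := hu
  rw [funext hug]
  exact (absolutelyContinuousOnInterval_const (u 0) p q).add
    (absolutelyContinuousOnInterval_primitive (hg.locallyIntegrable one_le_two) 0 p q)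

lemma exists_ae_hasDerivAt (hu : IsH1 u) :
    ∃ g : ℝ → ℝ, MemLp g 2 ∧ ∀ᵐ x, HasDerivAt u (g x) x := by
  obtain ⟨-, -, g, hg, hug⟩ := hu
  refine ⟨g, hg, ?_⟩
  filter_upwards [_root_.LocallyIntegrable.ae_hasDerivAt_integral
    (hg.locallyIntegrable one_le_two)] with x hx
  rw [funext hug]
  exact (hx 0).const_add (u 0)

lemma ae_differentiableAt (hu : IsH1 u) : ∀ᵐ x, DifferentiableAt ℝ u x := by
  obtain ⟨g, -, hug⟩ := hu.exists_ae_hasDerivAt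
  exact hug.mono fun _ hx => hx.differentiableAt

lemma memLp_deriv_s2 (hu : IsH1 u) : MemLp (deriv u) 2 := by
  obtain ⟨g, hg, hug⟩ := hu.exists_ae_hasDerivAt
  exact hg.ae_eq (hug.mono fun _ hx => hx.deriv.symm)

lemma of_absolutelyContinuousOnInterval
    (hac : ∀ p q : ℝ, AbsolutelyContinuousOnInterval u p q) (hu : MemLp u 2)
    (hu' : MemLp (deriv u) 2) : IsH1 u := by
  refine ⟨continuous_iff_continuousAt.2 fun x => ?_, hu, deriv u, hu', fun x => ?_⟩
  · refine (hac (x - 1) (x + 1)).continuousOn.continuousAt ?_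
    rw [uIcc_of_le (by linarith)]
    exact Icc_mem_nhds (by linarith) (by linarith)
  · linarith [(hac 0 x).integral_deriv_eq_sub]

lemma ae_deriv_add_const_mul (hu : IsH1 u) (hφ : IsH1 φ) (ε : ℝ) :
    ∀ᵐ x, deriv (fun y => u y + ε * φ y) x = deriv u x + ε * deriv φ x := by
  filter_upwards [hu.ae_differentiableAt, hφ.ae_differentiableAt] with x hux hφx
  exact (hux.hasDerivAt.add (hφx.hasDerivAt.const_mul ε)).deriv

lemma add_const_mul (hu : IsH1 u) (hφ : IsH1 φ) (ε : ℝ) : IsH1 fun x => u x + ε * φ x :=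
  of_absolutelyContinuousOnInterval
    (fun p q => (hu.absolutelyContinuousOnInterval p q).add
      ((hφ.absolutelyContinuousOnInterval p q).const_mul ε))
    (hu.memLp.add (hφ.memLp.const_mul ε))
    ((memLp_congr_ae (hu.ae_deriv_add_const_mul hφ ε)).2
      (hu.memLp_deriv_s2.add (hφ.memLp_deriv_s2.const_mul ε)))

lemma lipschitz_comp (hu : IsH1 u) {K : ℝ≥0} {T : ℝ → ℝ} (hT : LipschitzWith K T)
    (hT0 : T 0 = 0) : IsH1 (T ∘ u) := by
  refine of_absolutelyContinuousOnInterval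
    (fun p q => absolutelyContinuousOnInterval_lipschitz_comp hT
      (hu.absolutelyContinuousOnInterval p q)) (hT.comp_memLp hT0 hu.memLp) ?_
  refine hu.memLp_deriv_s2.of_le_mul (c := K) (measurable_deriv _).aestronglyMeasurable ?_
  exact hu.ae_differentiableAt.mono fun _ hx => norm_deriv_lipschitz_comp_le hT hx

lemma of_primitive {g : ℝ → ℝ} (hg : MemLp g 2) (c : ℝ)
    (hφ : HasCompactSupport fun x => ∫ t in c..x, g t) : IsH1 fun x => ∫ t in c..x, g t := by
  have hloc : LocallyIntegrable g := hg.locallyIntegrable one_le_two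
  refine of_absolutelyContinuousOnInterval (absolutelyContinuousOnInterval_primitive hloc c)
    ((continuous_primitive_of_locallyIntegrable hloc c).memLp_of_hasCompactSupport hφ) ?_
  exact hg.ae_eq ((ae_deriv_primitive_eq hloc c).mono fun _ hx => hx.symm)

end IsH1

section Energy

variable {V u φ : ℝ → ℝ}

/-- The symmetric bilinear form `⟨u, φ⟩_V = ∫_ℝ (u' φ' + V u φ)` whose quadratic form is `IV V`.
The derivatives are classical ones, as in `IV`. -/
noncomputable def formV (V u φ : ℝ → ℝ) : ℝ :=
  ∫ x : ℝ, (deriv u x * deriv φ x + V x * u x * φ x)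

lemma integrable_formV (hV : MemLp V ⊤) (hu : IsH1 u) (hφ : IsH1 φ) :
    Integrable fun x => deriv u x * deriv φ x + V x * u x * φ x :=
  (hu.memLp_deriv_s2.integrable_mul hφ.memLp_deriv_s2).add
    ((hu.memLp.mul hV : MemLp (V * u) 2).integrable_mul hφ.memLp)

lemma integrable_IV (hV : MemLp V ⊤) (hu : IsH1 u) :
    Integrable fun x => deriv u x ^ 2 + V x * u x ^ 2 :=
  (integrable_formV hV hu hu).congr (.of_forall fun x => by ring)

lemma IV_add_const_mul (hV : MemLp V ⊤) (hu : IsH1 u) (hφ : IsH1 φ) (ε : ℝ) :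
    IV V (fun x => u x + ε * φ x) = IV V u + (2 * ε * formV V u φ + ε ^ 2 * IV V φ) := by
  have hlinear := (integrable_formV hV hu hφ).const_mul (2 * ε)
  have hquadratic := (integrable_IV hV hφ).const_mul (ε ^ 2)
  calc IV V (fun x => u x + ε * φ x)
      = ∫ x, ((deriv u x ^ 2 + V x * u x ^ 2) +
          (2 * ε * (deriv u x * deriv φ x + V x * u x * φ x) +
            ε ^ 2 * (deriv φ x ^ 2 + V x * φ x ^ 2))) := by
        refine integral_congr_ae ?_
        filter_upwards [hu.ae_deriv_add_const_mul hφ ε] with x hx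
        rw [hx]
        ring
    _ = IV V u + (2 * ε * formV V u φ + ε ^ 2 * IV V φ) := by
        rw [integral_add (integrable_IV hV hu) (hlinear.fun_add hquadratic),
          integral_add hlinear hquadratic, integral_const_mul, integral_const_mul, IV, formV, IV]

lemma IV_lipschitz_comp_le (hV : MemLp V ⊤) (hV0 : 0 ≤ᵐ[volume] V) (hu : IsH1 u) {T : ℝ → ℝ}
    (hT : LipschitzWith 1 T) (hT0 : T 0 = 0) : IV V (T ∘ u) ≤ IV V u := by
  refine integral_mono_ae (integrable_IV hV (hu.lipschitz_comp hT hT0)) (integrable_IV hV hu) ?_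
  filter_upwards [hV0, hu.ae_differentiableAt] with x hVx hux
  have hderiv : |deriv (T ∘ u) x| ≤ |deriv u x| := by
    simpa using norm_deriv_lipschitz_comp_le hT hux
  have hval : |T (u x)| ≤ |u x| := by simpa [hT0] using hT.dist_le_mul (u x) 0
  exact add_le_add (sq_le_sq.2 hderiv) (mul_le_mul_of_nonneg_left (sq_le_sq.2 hval) hVx)

theorem formV_eq_zero_of_isMinOn {a : ℝ} (hV : MemLp V ⊤) (hu : IsH1 u)
    (hmin : IsMinOn (IV V) {w | IsH1 w ∧ w a = u a} u) (hφ : IsH1 φ) (hφa : φ a = 0) :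
    formV V u φ = 0 := by
  have hquad : ∀ ε : ℝ, 0 ≤ IV V φ * (ε * ε) + 2 * formV V u φ * ε + 0 := fun ε => by
    have hle : IV V u ≤ IV V fun x => u x + ε * φ x :=
      hmin ⟨hu.add_const_mul hφ ε, by simp [hφa]⟩
    rw [IV_add_const_mul hV hu hφ] at hle
    linarith
  have hdiscrim := discrim_le_zero hquad
  rw [discrim] at hdiscrim
  nlinarith

end Energy

section Truncation

/-- Truncation to `[-1, 1]`, which sends functions in `H¹(ℝ)` with value `1` at `a` into `K_a`. -/
noncomputable def unitClip (t : ℝ) : ℝ := max (-1) (min 1 t)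

lemma lipschitzWith_unitClip : LipschitzWith 1 unitClip :=
  (LipschitzWith.id.const_min 1).const_max (-1)

lemma unitClip_zero : unitClip 0 = 0 := by simp [unitClip]

lemma unitClip_one : unitClip 1 = 1 := by simp [unitClip]

lemma abs_unitClip_le_one (t : ℝ) : |unitClip t| ≤ 1 := by simp [unitClip, abs_le]

lemma supNorm_eq_one {u : ℝ → ℝ} {a : ℝ} (hu : ∀ x, |u x| ≤ 1) (ha : u a = 1) :
    supNorm u = 1 := by
  refine le_antisymm (ciSup_le hu) ?_
  simpa [ha, supNorm] using le_ciSup (f := fun x => |u x|) ⟨1, forall_mem_range.2 hu⟩ a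

lemma IsH1.inKa_unitClip_comp {w : ℝ → ℝ} {a : ℝ} (hw : IsH1 w) (ha : w a = 1) :
    InKa a (unitClip ∘ w) := by
  have hval : (unitClip ∘ w) a = 1 := by simp [ha, unitClip_one]
  exact ⟨hw.lipschitz_comp lipschitzWith_unitClip unitClip_zero, hval,
    supNorm_eq_one (fun x => abs_unitClip_le_one (w x)) hval⟩

variable {V u : ℝ → ℝ} {a : ℝ}

lemma InKa.abs_le_one (hu : InKa a u) (x : ℝ) : |u x| ≤ 1 := by
  have hsup : ⨆ x, |u x| = 1 := hu.2.2
  have hbdd : BddAbove (range fun x => |u x|) := by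
    by_contra hbdd
    exact zero_ne_one ((Real.iSup_of_not_bddAbove hbdd).symm.trans hsup)
  exact hsup ▸ le_ciSup hbdd x

lemma InKa.isMinOn_eval_eq (hV : MemLp V ⊤) (hV0 : 0 ≤ᵐ[volume] V) (hu : InKa a u)
    (hmin : IsMinOn (IV V) {w | InKa a w} u) : IsMinOn (IV V) {w | IsH1 w ∧ w a = u a} u :=
  fun _ ⟨hw, hwa⟩ => (hmin (hw.inKa_unitClip_comp (hwa.trans hu.2.1))).trans
    (IV_lipschitz_comp_le hV hV0 hw lipschitzWith_unitClip unitClip_zero)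

end Truncation

section WeakSecondDerivative

lemma support_primitive_subset_Ioc {g : ℝ → ℝ} {p q : ℝ} (hg : Function.support g ⊆ Ioc p q)
    (hg0 : ∫ t, g t = 0) : Function.support (fun x => ∫ t in p..x, g t) ⊆ Ioc p q := by
  refine Function.support_subset_iff'.2 fun x hx => ?_
  rcases le_or_gt x p with hxp | hpx
  · refine intervalIntegral.integral_zero_ae (.of_forall fun t ht => ?_)
    rw [uIoc_of_ge hxp] at ht
    exact Function.support_subset_iff'.1 hg t fun ht' => ht'.1.not_ge ht.2
  · have hqx : q ≤ x := le_of_not_ge fun hxq => hx ⟨hpx, hxq⟩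
    rw [intervalIntegral.integral_eq_integral_of_support_subset
      (hg.trans (Ioc_subset_Ioc_right hqx)), hg0]

lemma exists_Icc_subset_of_uIcc_subset {U : Set ℝ} (hU : IsOpen U) {x y : ℝ}
    (hxy : uIcc x y ⊆ U) : ∃ p q, x ∈ Ioo p q ∧ y ∈ Ioo p q ∧ Icc p q ⊆ U := by
  obtain ⟨δ, hδ, hδU⟩ := isCompact_uIcc.exists_cthickening_subset_open hU hxy
  refine ⟨min x y - δ, max x y + δ, ?_, ?_, fun z hz => hδU ?_⟩
  · constructor <;> linarith [min_le_left x y, le_max_left x y]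
  · constructor <;> linarith [min_le_right x y, le_max_right x y]
  · refine Metric.mem_cthickening_of_dist_le z (projIcc _ _ min_le_max z) δ _ (Subtype.prop _) ?_
    rw [Real.dist_eq, coe_projIcc, abs_le]
    grind

/-- `u'' = f` weakly on `U`, for `u ∈ H¹(ℝ)`: the identity `∫ u' φ' = -∫ f φ` holds for all
`φ ∈ H¹(ℝ)` with compact support in `U`. -/
def HasWeakSecondDerivOn (u f : ℝ → ℝ) (U : Set ℝ) : Prop :=
  ∀ φ : ℝ → ℝ, IsH1 φ → HasCompactSupport φ → tsupport φ ⊆ U →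
    ∫ x, (deriv u x * deriv φ x + f x * φ x) = 0

theorem hasWeakSecondDerivOn_of_isMinOn {V u : ℝ → ℝ} {a : ℝ} (hV : MemLp V ⊤) (hu : IsH1 u)
    (hmin : IsMinOn (IV V) {w | IsH1 w ∧ w a = u a} u) :
    HasWeakSecondDerivOn u (fun x => V x * u x) {a}ᶜ := fun _ hφ _ hφU =>
  formV_eq_zero_of_isMinOn hV hu hmin hφ (image_eq_zero_of_notMem_tsupport fun ha => hφU ha rfl)

namespace HasWeakSecondDerivOn

variable {u f : ℝ → ℝ} {U : Set ℝ}

lemma integral_deriv_sub_primitive_mul_eq_zero (h : HasWeakSecondDerivOn u f U) (hu : IsH1 u)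
    (hf : LocallyIntegrable f) {p q : ℝ} (hpq : Icc p q ⊆ U) {g : ℝ → ℝ} (hg : MemLp g 2)
    (hgpq : Function.support g ⊆ Ioc p q) (hg0 : ∫ t, g t = 0) :
    ∫ x in p..q, (deriv u x - ∫ t in p..x, f t) * g x = 0 := by
  have hgloc : LocallyIntegrable g := hg.locallyIntegrable one_le_two
  set φ : ℝ → ℝ := fun x => ∫ t in p..x, g t
  have hφsupp : Function.support φ ⊆ Ioc p q := support_primitive_subset_Ioc hgpq hg0
  have hφt : tsupport φ ⊆ Icc p q :=
    closure_minimal (hφsupp.trans Ioc_subset_Icc_self) isClosed_Icc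
  have hφcomp : HasCompactSupport φ := isCompact_Icc.of_isClosed_subset (isClosed_tsupport φ) hφt
  have hweak : ∫ x in p..q, (deriv u x * g x + f x * φ x) = 0 := by
    rw [intervalIntegral.integral_eq_integral_of_support_subset,
      ← h φ (.of_primitive hg p hφcomp) hφcomp (hφt.trans hpq)]
    · refine integral_congr_ae ?_
      filter_upwards [ae_deriv_primitive_eq hgloc p] with x hx
      rw [hx]
    · refine (Function.support_add _ _).trans (union_subset ?_ ?_)
      · exact (Function.support_mul_subset_right _ _).trans hgpq
      · exact (Function.support_mul_subset_right _ _).trans hφsupp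
  have hparts : ∫ x in p..q, (∫ t in p..x, f t) * g x = -∫ x in p..q, f x * φ x :=
    integral_primitive_mul_eq_neg hf hgloc
      ((intervalIntegral.integral_eq_integral_of_support_subset hgpq).trans hg0)
  have hu'g : IntervalIntegrable (fun x => deriv u x * g x) volume p q :=
    (hu.memLp_deriv_s2.integrable_mul hg).intervalIntegrable
  have hfφ : IntervalIntegrable (fun x => f x * φ x) volume p q :=
    (intervalIntegrable_of_locallyIntegrable_s2 hf p q).mul_continuousOn
      (continuous_primitive_of_locallyIntegrable hgloc p).continuousOn
  have hFg : IntervalIntegrable (fun x => (∫ t in p..x, f t) * g x) volume p q :=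
    (intervalIntegrable_of_locallyIntegrable_s2 hgloc p q).continuousOn_mul
      (continuous_primitive_of_locallyIntegrable hf p).continuousOn
  simp only [sub_mul]
  rw [intervalIntegral.integral_sub hu'g hFg, hparts, sub_neg_eq_add,
    ← intervalIntegral.integral_add hu'g hfφ, hweak]

-- The du Bois-Reymond argument: `u' - ∫ f` is orthogonal to all mean-zero functions on `(p, q]`.
lemma exists_ae_deriv_eq_add_primitive (h : HasWeakSecondDerivOn u f U) (hu : IsH1 u)
    (hf : LocallyIntegrable f) {p q : ℝ} (hpq : Icc p q ⊆ U) :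
    ∃ c, ∀ᵐ x ∂volume.restrict (Ioc p q), deriv u x = c + ∫ t in p..x, f t := by
  rcases lt_or_ge q p with hqp | hle
  · exact ⟨0, by simp [Ioc_eq_empty_of_le hqp.le]⟩
  have hcont : Continuous fun x => ∫ t in p..x, f t :=
    continuous_primitive_of_locallyIntegrable hf p
  have hprim : MemLp (fun x => ∫ t in p..x, f t) 2 (volume.restrict (Ioc p q)) := by
    obtain ⟨C, hC⟩ := isCompact_Icc.exists_bound_of_continuousOn (s := Icc p q) hcont.continuousOn
    exact .of_bound hcont.aestronglyMeasurable C <|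
      (ae_restrict_mem measurableSet_Ioc).mono fun x hx => hC x (Ioc_subset_Icc_self hx)
  refine ⟨⨍ x in Ioc p q, (deriv u x - ∫ t in p..x, f t), ?_⟩
  have hconst := ae_eq_average_of_integral_mul_eq_zero
    (hu.memLp_deriv_s2.restrict (Ioc p q) |>.sub hprim) fun g hg hg0 => ?_
  · filter_upwards [hconst] with x hx
    exact sub_eq_iff_eq_add.1 hx
  · have horth := h.integral_deriv_sub_primitive_mul_eq_zero hu hf hpq
      ((memLp_indicator_iff_restrict measurableSet_Ioc).2 hg) support_indicator_subset
      ((integral_indicator measurableSet_Ioc).trans hg0)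
    rw [intervalIntegral.integral_of_le hle] at horth
    rw [← horth]
    exact setIntegral_congr_fun measurableSet_Ioc fun x hx => by simp [indicator_of_mem hx]

lemma exists_hasDerivAt (h : HasWeakSecondDerivOn u f U) (hu : IsH1 u)
    (hf : LocallyIntegrable f) {p q : ℝ} (hpq : Icc p q ⊆ U) :
    ∃ c, ∀ x ∈ Ioo p q, HasDerivAt u (c + ∫ t in p..x, f t) x := by
  obtain ⟨c, hc⟩ := h.exists_ae_deriv_eq_add_primitive hu hf hpq
  exact ⟨c, fun _ hx => hasDerivAt_of_ae_deriv_eq (hu.absolutelyContinuousOnInterval p q)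
    (continuous_const.add (continuous_primitive_of_locallyIntegrable hf p)) hc hx⟩

theorem differentiableAt (h : HasWeakSecondDerivOn u f U) (hU : IsOpen U) (hu : IsH1 u)
    (hf : LocallyIntegrable f) {x : ℝ} (hx : x ∈ U) : DifferentiableAt ℝ u x := by
  obtain ⟨p, q, hxpq, -, hpq⟩ := exists_Icc_subset_of_uIcc_subset (x := x) (y := x) hU (by simpa)
  obtain ⟨c, hc⟩ := h.exists_hasDerivAt hu hf hpq
  exact (hc x hxpq).differentiableAt

theorem deriv_eq_add_integral (h : HasWeakSecondDerivOn u f U) (hU : IsOpen U) (hu : IsH1 u)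
    (hf : LocallyIntegrable f) {x y : ℝ} (hxy : uIcc x y ⊆ U) :
    deriv u y = deriv u x + ∫ t in x..y, f t := by
  obtain ⟨p, q, hx, hy, hpq⟩ := exists_Icc_subset_of_uIcc_subset hU hxy
  obtain ⟨c, hc⟩ := h.exists_hasDerivAt hu hf hpq
  have hadd := intervalIntegral.integral_add_adjacent_intervals
    (intervalIntegrable_of_locallyIntegrable_s2 hf p x)
    (intervalIntegrable_of_locallyIntegrable_s2 hf x y)
  rw [(hc x hx).deriv, (hc y hy).deriv, ← hadd, add_assoc]

lemma abs_deriv_le (h : HasWeakSecondDerivOn u f U) (hU : IsOpen U) (hu : IsH1 u)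
    (hf : LocallyIntegrable f) {A M : ℝ} (hA : ∀ x, |u x| ≤ A) (hM : ∀ᵐ x, ‖f x‖ ≤ M)
    {s t x : ℝ} (hst : s < t) (hstU : Icc s t ⊆ U) (hx : x ∈ Icc s t) :
    |deriv u x| ≤ 2 * A / (t - s) + M * (t - s) := by
  have hlen : 0 < t - s := sub_pos.2 hst
  obtain ⟨ξ, hξ, hslope⟩ := exists_deriv_eq_slope u hst
    (fun y hy => (h.differentiableAt hU hu hf (hstU hy)).continuousAt.continuousWithinAt)
    fun y hy => (h.differentiableAt hU hu hf
      (hstU (Ioo_subset_Icc_self hy))).differentiableWithinAt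
  have hderiv_ξ : |deriv u ξ| ≤ 2 * A / (t - s) := by
    rw [hslope, abs_div, abs_of_pos hlen]
    gcongr
    linarith [abs_sub (u t) (u s), hA s, hA t]
  have hM0 : 0 ≤ M := hM.exists.elim fun _ => (norm_nonneg _).trans
  have hint : |∫ r in ξ..x, f r| ≤ M * (t - s) := calc
    |∫ r in ξ..x, f r| ≤ M * |x - ξ| :=
      intervalIntegral.norm_integral_le_of_norm_le_const_ae (hM.mono fun _ hr _ => hr)
    _ ≤ M * (t - s) := by
      gcongr
      exact abs_sub_le_of_le_of_le hx.1 hx.2 hξ.1.le hξ.2.le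
  rw [h.deriv_eq_add_integral hU hu hf
    ((uIcc_subset_Icc (Ioo_subset_Icc_self hξ) hx).trans hstU)]
  exact (abs_add_le _ _).trans (add_le_add hderiv_ξ hint)

theorem memLp_top_deriv {a : ℝ} (h : HasWeakSecondDerivOn u f {a}ᶜ) (hu : IsH1 u) {A : ℝ}
    (hA : ∀ x, |u x| ≤ A) (hf : MemLp f ⊤) : MemLp (deriv u) ⊤ := by
  refine memLp_top_of_bound (measurable_deriv u).aestronglyMeasurable
    (2 * A + lpNorm f ⊤ volume) ?_
  filter_upwards [compl_mem_ae_iff.2 (measure_singleton a)] with x hx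
  obtain ⟨s, hs, hxs⟩ : ∃ s, Icc s (s + 1) ⊆ {a}ᶜ ∧ x ∈ Icc s (s + 1) := by
    rcases lt_or_gt_of_ne hx with hxa | hax
    · exact ⟨x - 1, fun y hy => by grind, by grind⟩
    · exact ⟨x, fun y hy => by grind, by grind⟩
  simpa using h.abs_deriv_le isOpen_compl_singleton hu (hf.locallyIntegrable le_top) hA
    (ae_le_lpNorm_exponent_top hf) (lt_add_one s) hs hxs

end HasWeakSecondDerivOn

end WeakSecondDerivative

theorem minimizer_W2inf_general (V : ℝ → ℝ) (hV : MemLp V ⊤ (volume : Measure ℝ))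
    (hV0 : 0 ≤ᵐ[volume] V) (a : ℝ) (ua : ℝ → ℝ) (hua : InKa a ua)
    (hmin : ∀ u : ℝ → ℝ, InKa a u → IV V ua ≤ IV V u) :
    ∃ v w : ℝ → ℝ, MemLp v ⊤ (volume : Measure ℝ) ∧ MemLp w ⊤ (volume : Measure ℝ) ∧
      (∀ x y : ℝ, a < x → a < y →
        ua y = ua x + ∫ t in x..y, v t ∧ v y = v x + ∫ t in x..y, w t) ∧
      (∀ x y : ℝ, x < a → y < a →
        ua y = ua x + ∫ t in x..y, v t ∧ v y = v x + ∫ t in x..y, w t) ∧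
      (∀ᵐ x : ℝ, w x = V x * ua x) := by
  have hua_le : ∀ x, |ua x| ≤ 1 := hua.abs_le_one
  have hua_top : MemLp ua ⊤ :=
    memLp_top_of_bound hua.1.memLp.aestronglyMeasurable 1 (.of_forall hua_le)
  have hVua : MemLp (fun x => V x * ua x) ⊤ := hua_top.mul hV
  have hloc := hVua.locallyIntegrable le_top
  have hweak : HasWeakSecondDerivOn ua (fun x => V x * ua x) {a}ᶜ :=
    hasWeakSecondDerivOn_of_isMinOn hV hua.1 (hua.isMinOn_eval_eq hV hV0 hmin)
  have hprimitive : ∀ x y, uIcc x y ⊆ {a}ᶜ → ua y = ua x + ∫ t in x..y, deriv ua t ∧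
      deriv ua y = deriv ua x + ∫ t in x..y, V t * ua t := fun x y hxy =>
    ⟨by linarith [(hua.1.absolutelyContinuousOnInterval x y).integral_deriv_eq_sub],
      hweak.deriv_eq_add_integral isOpen_compl_singleton hua.1 hloc hxy⟩
  refine ⟨deriv ua, fun x => V x * ua x, hweak.memLp_top_deriv hua.1 hua_le hVua, hVua,
    fun x y hx hy => hprimitive x y ?_, fun x y hx hy => hprimitive x y ?_, .of_forall fun _ => rfl⟩
  · exact subset_compl_singleton_iff.2 (notMem_uIcc_of_lt hx hy)
  · exact subset_compl_singleton_iff.2 (notMem_uIcc_of_gt hx hy)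

/-- **Regularity of the minimizer.** For `V ∈ L^∞(ℝ)` with `ess inf V > 0`, `a ∈ ℝ`,
and `u_a` the minimizer of `‖·‖_V²` over `K_a`, we have `u_a ∈ W^{2,∞}(ℝ∖{a})` and
`u_a'' = V u_a` a.e. on `ℝ∖{a}`:  there are essentially bounded functions `v` (the first
derivative) and `w` (the second derivative) such that `u_a` is a primitive of `v` and `v`
a primitive of `w` on each of the half-lines `(-∞,a)` and `(a,∞)`, and `w = V·u_a` a.e. -/
theorem minimizer_W2inf (V : ℝ → ℝ) (hV : MemLp V ⊤ (volume : Measure ℝ))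
    (hpos : 0 < essInf V (volume : Measure ℝ)) (a : ℝ)
    (ua : ℝ → ℝ) (hua : InKa a ua)
    (hmin : ∀ u : ℝ → ℝ, InKa a u → IV V ua ≤ IV V u) :
    ∃ v w : ℝ → ℝ, MemLp v ⊤ (volume : Measure ℝ) ∧ MemLp w ⊤ (volume : Measure ℝ) ∧
      (∀ x y : ℝ, a < x → a < y →
        ua y = ua x + ∫ t in x..y, v t ∧ v y = v x + ∫ t in x..y, w t) ∧
      (∀ x y : ℝ, x < a → y < a →
        ua y = ua x + ∫ t in x..y, v t ∧ v y = v x + ∫ t in x..y, w t) ∧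
      (∀ᵐ x : ℝ, w x = V x * ua x) :=
  minimizer_W2inf_general V hV ((ae_pos_of_essInf_pos hV hpos).mono fun _ => le_of_lt) a ua hua hmin
end
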